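/- arXiv:1911.10382 — 8 statements merged into one kernel-verified Lean document; each statement's English description precedes it below -/
import Mathlib

section
/- Let A be a normal real n×n matrix, i.e. A Aᵀ = Aᵀ A. Then the matrix P := −(A + Aᵀ)/2 is symmetric, satisfies trace(P) = −trace(A), and satisfies the algebraic Riccati equation 2P² + AᵀP + PA = 0; moreover, H := A + P = (A − Aᵀ)/2 satisfies trace(H) = 0 and PH + HᵀP = 0. In particular the linear vector field F(x) = A x admits a strictly orthogonal Helmholtz–Hodge decomposition A x = −P x + H x. -/
open Matrix

/-!
Write `P = -(A + Aᵀ)/2`. Since `2P = -(A + Aᵀ)`, the Riccati residual `2P² + AᵀP + PA` collapses to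
the commutator `PA - AP`, which vanishes when `A` commutes with `Aᵀ`. As `P` is symmetric, the
orthogonality defect `PH + HᵀP` of `H = A + P` is that same residual.
-/

section Riccati

variable {R : Type*} [Ring R]

theorem riccati_eq_commutator {a b p : R} (hp : 2 * p = -(a + b)) :
    2 * p ^ 2 + b * p + p * a = p * a - a * p :=
  calc
    2 * p ^ 2 + b * p + p * a = 2 * p * p + b * p + p * a := by rw [sq, mul_assoc]
    _ = p * a - a * p := by rw [hp]; noncomm_ring

theorem mul_add_self_add_add_self_mul_eq_riccati (a b p : R) :
    p * (a + p) + (b + p) * p = 2 * p ^ 2 + b * p + p * a := by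
  noncomm_ring

end Riccati

section HelmholtzHodge

variable {n R : Type*} [Fintype n] [DecidableEq n] [CommRing R]

/-- The potential matrix `P = -(A + Aᵀ)/2` of the Helmholtz–Hodge decomposition
`A = -P + (A - Aᵀ)/2`. The division is by the matrix `2`, hence only meaningful when `2` is
invertible in `R`. -/
noncomputable def helmholtzPotential (A : Matrix n n R) : Matrix n n R :=
  -((A + Aᵀ) / 2)

variable [Invertible (2 : R)]

theorem matrix_div_two (M : Matrix n n R) : M / 2 = ⅟(2 : R) • M := by
  have two_inv : (2 : Matrix n n R)⁻¹ = ⅟(2 : R) • 1 :=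
    inv_eq_right_inv <| by
      rw [mul_smul_comm, mul_one, ← map_ofNat (algebraMap R (Matrix n n R)) 2,
        Algebra.algebraMap_eq_smul_one, smul_smul, invOf_mul_self, one_smul]
  rw [div_eq_mul_inv, two_inv, mul_smul_comm, mul_one]

theorem helmholtzPotential_eq_smul (A : Matrix n n R) :
    helmholtzPotential A = -(⅟(2 : R) • (A + Aᵀ)) :=
  congrArg Neg.neg (matrix_div_two _)

theorem isSymm_helmholtzPotential (A : Matrix n n R) : (helmholtzPotential A).IsSymm := by
  rw [helmholtzPotential_eq_smul]
  exact ((isSymm_add_transpose_self A).smul _).neg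

theorem two_mul_helmholtzPotential (A : Matrix n n R) :
    2 * helmholtzPotential A = -(A + Aᵀ) := by
  rw [helmholtzPotential_eq_smul, mul_neg, two_mul, ← add_smul, invOf_two_add_invOf_two, one_smul]

theorem trace_helmholtzPotential (A : Matrix n n R) :
    (helmholtzPotential A).trace = -A.trace := by
  rw [helmholtzPotential_eq_smul, trace_neg, trace_smul, trace_add, trace_transpose, ← two_mul,
    smul_eq_mul, invOf_mul_cancel_left]

theorem add_helmholtzPotential (A : Matrix n n R) :
    A + helmholtzPotential A = (A - Aᵀ) / 2 := by
  rw [matrix_div_two, helmholtzPotential_eq_smul]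
  nth_rw 1 [← one_smul R A, ← invOf_two_add_invOf_two]
  module

theorem trace_add_helmholtzPotential (A : Matrix n n R) :
    (A + helmholtzPotential A).trace = 0 := by
  rw [trace_add, trace_helmholtzPotential, add_neg_cancel]

theorem mulVec_eq_neg_helmholtzPotential_add (A : Matrix n n R) (x : n → R) :
    A *ᵥ x = -(helmholtzPotential A *ᵥ x) + ((A - Aᵀ) / 2) *ᵥ x := by
  rw [← add_helmholtzPotential, add_mulVec, add_comm (A *ᵥ x), neg_add_cancel_left]

variable {A : Matrix n n R}

theorem commute_helmholtzPotential (hA : Commute A Aᵀ) : Commute (helmholtzPotential A) A := by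
  rw [helmholtzPotential_eq_smul]
  exact (((Commute.refl A).add_left hA.symm).smul_left _).neg_left

theorem riccati_helmholtzPotential (hA : Commute A Aᵀ) :
    2 * helmholtzPotential A ^ 2 + Aᵀ * helmholtzPotential A + helmholtzPotential A * A = 0 := by
  rw [riccati_eq_commutator (two_mul_helmholtzPotential A), sub_eq_zero]
  exact commute_helmholtzPotential hA

theorem helmholtzPotential_mul_add_transpose_mul_eq_zero (hA : Commute A Aᵀ) :
    helmholtzPotential A * (A + helmholtzPotential A) +
      (A + helmholtzPotential A)ᵀ * helmholtzPotential A = 0 := by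
  rw [transpose_add, (isSymm_helmholtzPotential A).eq,
    mul_add_self_add_add_self_mul_eq_riccati, riccati_helmholtzPotential hA]

theorem stmt_2_general (A : Matrix n n R) (hA : A * Aᵀ = Aᵀ * A) :
    (helmholtzPotential A).IsSymm ∧
    (helmholtzPotential A).trace = -A.trace ∧
    2 * helmholtzPotential A ^ 2 + Aᵀ * helmholtzPotential A + helmholtzPotential A * A = 0 ∧
    A + helmholtzPotential A = (A - Aᵀ) / 2 ∧
    (A + helmholtzPotential A).trace = 0 ∧
    helmholtzPotential A * (A + helmholtzPotential A) +
      (A + helmholtzPotential A)ᵀ * helmholtzPotential A = 0 ∧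
    ∀ x : n → R, A *ᵥ x = -(helmholtzPotential A *ᵥ x) + ((A - Aᵀ) / 2) *ᵥ x :=
  ⟨isSymm_helmholtzPotential A, trace_helmholtzPotential A, riccati_helmholtzPotential hA,
    add_helmholtzPotential A, trace_add_helmholtzPotential A,
    helmholtzPotential_mul_add_transpose_mul_eq_zero hA, mulVec_eq_neg_helmholtzPotential_add A⟩

end HelmholtzHodge

theorem stmt_2 (n : ℕ) (A : Matrix (Fin n) (Fin n) ℝ) (hA : A * Aᵀ = Aᵀ * A) :
    (-((A + Aᵀ) / 2)).IsSymm ∧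
    (-((A + Aᵀ) / 2)).trace = -A.trace ∧
    2 * (-((A + Aᵀ) / 2)) ^ 2 + Aᵀ * (-((A + Aᵀ) / 2)) + (-((A + Aᵀ) / 2)) * A = 0 ∧
    A + (-((A + Aᵀ) / 2)) = (A - Aᵀ) / 2 ∧
    (A + (-((A + Aᵀ) / 2))).trace = 0 ∧
    (-((A + Aᵀ) / 2)) * (A + (-((A + Aᵀ) / 2)))
      + (A + (-((A + Aᵀ) / 2)))ᵀ * (-((A + Aᵀ) / 2)) = 0 ∧
    (∀ x : EuclideanSpace ℝ (Fin n),
      Matrix.toEuclideanLin A x =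
        -Matrix.toEuclideanLin (-((A + Aᵀ) / 2)) x
          + Matrix.toEuclideanLin ((A - Aᵀ) / 2) x) := by
  obtain ⟨symm, trace_P, riccati, add_eq, trace_H, orthogonal, decomp⟩ := stmt_2_general A hA
  exact ⟨symm, trace_P, riccati, add_eq, trace_H, orthogonal,
    fun x => congrArg (WithLp.toLp 2) (decomp x.ofLp)⟩
end

section
/- Let h : ℝⁿ → ℝ be a harmonic function (h is smooth and its Laplacian, the sum of its second partial derivatives, vanishes identically) such that |h(x) − h(0)| ≤ C‖x‖ᵏ for all x ∈ ℝⁿ, where C > 0 is a constant and k is a positive integer. Then h is a polynomial of total degree at most k, i.e. there exists a multivariate polynomial p in n variables with real coefficients and total degree at most k such that h(x) = p(x) for all x. -/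
/-!
The gradient of a harmonic function `u` is controlled by Caccioppoli's inequality
`∫_{B_R} ‖∇u‖² ≤ C R⁻² ∫_{B_{2R}} u²`, so each differentiation lowers the growth exponent of
`R ↦ ∫_{B_R} u²` by two. For `u = O(‖x‖ᵏ)` this exponent is initially `2k + dim E`; the partial
derivatives of `u` are again harmonic, so after finitely many differentiations the integral tends
to zero and the derivatives vanish identically. Taylor's formula makes `u` a polynomial, and its
homogeneous components of degree greater than `k` vanish because of the growth along rays.
-/

open Asymptotics Bornology Filter InnerProductSpace MeasureTheory Metric Module Set Topology
open scoped ContDiff Gradient Laplacian Polynomial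

section Laplacian

variable {E F ι : Type*} [NormedAddCommGroup E] [NormedAddCommGroup F] [NormedSpace ℝ F]

theorem fderiv_fderiv_apply [NormedSpace ℝ E] {f : E → F} (hf : ContDiff ℝ 2 f) (v w x : E) :
    fderiv ℝ (fun y => fderiv ℝ f y v) x w = fderiv ℝ (fderiv ℝ f) x w v := by
  have hdf : DifferentiableAt ℝ (fderiv ℝ f) x :=
    (hf.fderiv_right (m := 1) le_rfl).differentiable one_ne_zero x
  simp [fderiv_clm_apply hdf (differentiableAt_const v)]

theorem fderiv_fderiv_apply_comm [NormedSpace ℝ E] {f : E → F} (hf : ContDiff ℝ 2 f)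
    (v w : E) :
    (fun x => fderiv ℝ (fun y => fderiv ℝ f y v) x w) =
      fun x => fderiv ℝ (fun y => fderiv ℝ f y w) x v := by
  funext x
  rw [fderiv_fderiv_apply hf, fderiv_fderiv_apply hf]
  exact hf.contDiffAt.isSymmSndFDerivAt (by simp) w v

theorem contDiff_fderiv_apply [NormedSpace ℝ E] {f : E → F} {m n : ℕ∞ω} (hf : ContDiff ℝ n f)
    (hmn : m + 1 ≤ n) (v : E) : ContDiff ℝ m fun x => fderiv ℝ f x v :=
  (hf.fderiv_right hmn).clm_apply contDiff_const

variable [InnerProductSpace ℝ E] [FiniteDimensional ℝ E] [Fintype ι]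

theorem laplacian_eq_sum_fderiv_fderiv (b : OrthonormalBasis ι ℝ E) {f : E → F}
    (hf : ContDiff ℝ 2 f) :
    Δ f = fun x => ∑ i, fderiv ℝ (fun y => fderiv ℝ f y (b i)) x (b i) := by
  simp [laplacian_eq_iteratedFDeriv_orthonormalBasis f b, iteratedFDeriv_two_apply,
    fderiv_fderiv_apply hf]

theorem laplacian_fderiv_apply {f : E → F} (hf : ContDiff ℝ 3 f) (v : E) :
    Δ (fun x => fderiv ℝ f x v) = fun x => fderiv ℝ (Δ f) x v := by
  let b := stdOrthonormalBasis ℝ E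
  have hf₂ : ContDiff ℝ 2 f := hf.of_le (by norm_num)
  have hdf (w : E) : ContDiff ℝ 2 fun x => fderiv ℝ f x w :=
    contDiff_fderiv_apply hf (by norm_num) w
  have hcomm (w : E) : (fun x => fderiv ℝ (fun y => fderiv ℝ (fun z => fderiv ℝ f z v) y w) x w) =
      fun x => fderiv ℝ (fun y => fderiv ℝ (fun z => fderiv ℝ f z w) y w) x v := by
    rw [fderiv_fderiv_apply_comm hf₂ v w, fderiv_fderiv_apply_comm (hdf w) v w]
  funext x
  have hddf (w : E) : DifferentiableAt ℝ (fun y => fderiv ℝ (fun z => fderiv ℝ f z w) y w) x :=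
    (contDiff_fderiv_apply (m := 1) (hdf w) (by norm_num) w).differentiable one_ne_zero x
  calc Δ (fun x => fderiv ℝ f x v) x
      = ∑ i, fderiv ℝ (fun y => fderiv ℝ (fun z => fderiv ℝ f z v) y (b i)) x (b i) := by
        rw [laplacian_eq_sum_fderiv_fderiv b (hdf v)]
    _ = ∑ i, fderiv ℝ (fun y => fderiv ℝ (fun z => fderiv ℝ f z (b i)) y (b i)) x v :=
        Finset.sum_congr rfl fun i _ => congrFun (hcomm (b i)) x
    _ = fderiv ℝ (Δ f) x v := by
        rw [laplacian_eq_sum_fderiv_fderiv b hf₂, fderiv_fun_sum fun i _ => hddf (b i)]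
        simp

end Laplacian

section Gradient

variable {E : Type*} [NormedAddCommGroup E] [InnerProductSpace ℝ E] [CompleteSpace E]

theorem continuous_gradient {f : E → ℝ} (hf : ContDiff ℝ 1 f) : Continuous (∇ f) :=
  (toDual ℝ E).symm.continuous.comp (hf.continuous_fderiv one_ne_zero)

theorem tsupport_gradient_subset (f : E → ℝ) : tsupport (∇ f) ⊆ tsupport f :=
  (tsupport_comp_subset (map_zero (toDual ℝ E).symm) (fderiv ℝ f)).trans
    (tsupport_fderiv_subset ℝ)

theorem hasCompactSupport_gradient {f : E → ℝ} (hf : HasCompactSupport f) :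
    HasCompactSupport (∇ f) :=
  hf.of_isClosed_subset (isClosed_tsupport _) (tsupport_gradient_subset f)

theorem gradient_fun_mul {f g : E → ℝ} {x : E} (hf : DifferentiableAt ℝ f x)
    (hg : DifferentiableAt ℝ g x) :
    ∇ (fun y => f y * g y) x = f x • ∇ g x + g x • ∇ f x := by
  simp [gradient, fderiv_fun_mul hf hg]

theorem integrable_sq_mul_norm_gradient_sq [MeasurableSpace E] [BorelSpace E] (μ : Measure E)
    [IsFiniteMeasureOnCompacts μ] {η u : E → ℝ} (hη : Continuous η) (hηc : HasCompactSupport η)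
    (hu : ContDiff ℝ 1 u) : Integrable (fun x => η x ^ 2 * ‖∇ u x‖ ^ 2) μ :=
  ((hη.pow 2).mul ((continuous_gradient hu).norm.pow 2)).integrable_of_hasCompactSupport <|
    hηc.mono fun x hx h0 => hx (by simp [h0])

theorem setIntegral_fderiv_apply_sq_le [MeasurableSpace E] [BorelSpace E] (μ : Measure E)
    [IsFiniteMeasureOnCompacts μ] {u : E → ℝ} (hu : ContDiff ℝ 1 u) {K : Set E}
    (hK : IsCompact K) (v : E) :
    ∫ x in K, fderiv ℝ u x v ^ 2 ∂μ ≤ ‖v‖ ^ 2 * ∫ x in K, ‖∇ u x‖ ^ 2 ∂μ := by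
  rw [← integral_const_mul]
  refine setIntegral_mono ?_ ?_ fun x => ?_
  · exact ((contDiff_fderiv_apply (m := 0) hu le_rfl v).continuous.pow 2)
      |>.continuousOn.integrableOn_compact hK
  · exact (continuous_const.mul ((continuous_gradient hu).norm.pow 2))
      |>.continuousOn.integrableOn_compact hK
  · rw [← mul_pow, ← inner_gradient_left, mul_comm, ← sq_abs]
    gcongr
    exact abs_real_inner_le_norm _ _

end Gradient

section Caccioppoli

variable {E : Type*} [NormedAddCommGroup E] [InnerProductSpace ℝ E]

theorem sq_mul_norm_sq_le_inner_add (s t : ℝ) (a b : E) :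
    s ^ 2 * ‖a‖ ^ 2 ≤
      2 * ⟪s • (s • a + t • b) + (s * t) • b, a⟫_ℝ + 4 * (t ^ 2 * ‖b‖ ^ 2) := by
  have h_sq : 0 ≤ s ^ 2 * ‖a‖ ^ 2 + 4 * (s * t * ⟪b, a⟫_ℝ) + 4 * (t ^ 2 * ‖b‖ ^ 2) := by
    have h_nonneg := sq_nonneg ‖s • a + (2 * t) • b‖
    rw [norm_add_sq_real, norm_smul, norm_smul, mul_pow, mul_pow, Real.norm_eq_abs,
      Real.norm_eq_abs, sq_abs, sq_abs, real_inner_smul_left, real_inner_smul_right,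
      real_inner_comm] at h_nonneg
    linarith
  simp only [inner_add_left, real_inner_smul_left, real_inner_self_eq_norm_sq]
  linarith

theorem exists_cutoff_norm_gradient_le (E : Type*) [NormedAddCommGroup E] [InnerProductSpace ℝ E]
    [FiniteDimensional ℝ E] :
    ∃ M : ℝ, ∀ R > 0, ∃ η : E → ℝ, ContDiff ℝ 1 η ∧ tsupport η ⊆ closedBall 0 (2 * R) ∧
      (∀ x ∈ closedBall 0 R, η x = 1) ∧ ∀ x, ‖∇ η x‖ ≤ M / R := by
  let χ : ContDiffBump (0 : E) := ⟨1, 2, one_pos, one_lt_two⟩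
  have hχ : ContDiff ℝ 1 χ := χ.contDiff
  obtain ⟨M, hM⟩ := (hasCompactSupport_gradient χ.hasCompactSupport).exists_bound_of_continuous
    (continuous_gradient hχ)
  refine ⟨M, fun R hR => ⟨fun x => χ (R⁻¹ • x), hχ.comp (contDiff_const_smul _), ?_, ?_, ?_⟩⟩
  · refine closure_minimal (fun x hx => ?_) isClosed_closedBall
    have h_mem : R⁻¹ • x ∈ ball (0 : E) 2 := χ.support_eq ▸ hx
    rw [mem_ball_zero_iff, norm_smul, norm_inv, Real.norm_of_nonneg hR.le, inv_mul_lt_iff₀ hR]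
      at h_mem
    simpa [mul_comm] using h_mem.le
  · intro x hx
    apply χ.one_of_mem_closedBall
    rw [mem_closedBall_zero_iff] at hx ⊢
    rwa [norm_smul, norm_inv, Real.norm_of_nonneg hR.le, inv_mul_le_iff₀ hR, mul_one]
  · intro x
    rw [gradient, fderiv_comp_smul, map_smul, norm_smul, norm_inv, Real.norm_of_nonneg hR.le,
      div_eq_inv_mul]
    gcongr
    exact hM _

variable [FiniteDimensional ℝ E] [MeasurableSpace E] [BorelSpace E] (μ : Measure E)
  [μ.IsAddHaarMeasure]

theorem integral_mul_laplacian_eq_neg {φ u : E → ℝ} (hφ : ContDiff ℝ 1 φ)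
    (hφc : HasCompactSupport φ) (hu : ContDiff ℝ 2 u) :
    ∫ x, φ x * Δ u x ∂μ = -∫ x, ⟪∇ φ x, ∇ u x⟫_ℝ ∂μ := by
  let b := stdOrthonormalBasis ℝ E
  have hdu (i) : ContDiff ℝ 1 fun x => fderiv ℝ u x (b i) :=
    contDiff_fderiv_apply hu le_rfl (b i)
  have hφdd (i) : Integrable (fun x => φ x * fderiv ℝ (fun y => fderiv ℝ u y (b i)) x (b i)) μ :=
    (hφ.continuous.mul (contDiff_fderiv_apply (m := 0) (hdu i) le_rfl (b i)).continuous)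
      |>.integrable_of_hasCompactSupport hφc.mul_right
  have hdφd (i) : Integrable (fun x => fderiv ℝ φ x (b i) * fderiv ℝ u x (b i)) μ :=
    ((contDiff_fderiv_apply (m := 0) hφ le_rfl (b i)).continuous.mul (hdu i).continuous)
      |>.integrable_of_hasCompactSupport (hφc.fderiv_apply ℝ (b i)).mul_right
  have hφd (i) : Integrable (fun x => φ x * fderiv ℝ u x (b i)) μ :=
    (hφ.continuous.mul (hdu i).continuous).integrable_of_hasCompactSupport hφc.mul_right
  calc ∫ x, φ x * Δ u x ∂μ
      = ∑ i, ∫ x, φ x * fderiv ℝ (fun y => fderiv ℝ u y (b i)) x (b i) ∂μ := by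
        simp only [laplacian_eq_sum_fderiv_fderiv b hu, Finset.mul_sum]
        exact integral_finsetSum _ fun i _ => hφdd i
    _ = ∑ i, -∫ x, fderiv ℝ φ x (b i) * fderiv ℝ u x (b i) ∂μ :=
        Finset.sum_congr rfl fun i _ => integral_mul_fderiv_eq_neg_fderiv_mul_of_integrable
          (hdφd i) (hφdd i) (hφd i) (fun x _ => hφ.differentiable one_ne_zero x)
          (fun x _ => (hdu i).differentiable one_ne_zero x)
    _ = -∫ x, ⟪∇ φ x, ∇ u x⟫_ℝ ∂μ := by
        rw [Finset.sum_neg_distrib, ← integral_finsetSum _ fun i _ => hdφd i]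
        exact congrArg Neg.neg <| integral_congr_ae <| .of_forall fun x => by
          simpa [real_inner_comm] using b.sum_inner_mul_inner (∇ φ x) (∇ u x)

theorem integral_sq_mul_norm_gradient_sq_le {u η : E → ℝ} (hu : ContDiff ℝ 2 u) (hΔ : Δ u = 0)
    (hη : ContDiff ℝ 1 η) (hηc : HasCompactSupport η) :
    ∫ x, η x ^ 2 * ‖∇ u x‖ ^ 2 ∂μ ≤ 4 * ∫ x, u x ^ 2 * ‖∇ η x‖ ^ 2 ∂μ := by
  let φ : E → ℝ := fun x => η x * (η x * u x)
  have hu₁ : ContDiff ℝ 1 u := hu.of_le one_le_two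
  have hφ : ContDiff ℝ 1 φ := hη.mul (hη.mul hu₁)
  have hφc : HasCompactSupport φ := hηc.mul_right
  have h_green : ∫ x, ⟪∇ φ x, ∇ u x⟫_ℝ ∂μ = 0 := by
    simpa [hΔ] using integral_mul_laplacian_eq_neg μ hφ hφc hu
  have h_grad (x : E) : ∇ φ x = η x • (η x • ∇ u x + u x • ∇ η x) + (η x * u x) • ∇ η x := by
    have hηd := hη.differentiable one_ne_zero x
    have hud := hu₁.differentiable one_ne_zero x
    rw [gradient_fun_mul hηd (hηd.fun_mul hud), gradient_fun_mul hηd hud]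
  have hηu : Integrable (fun x => η x ^ 2 * ‖∇ u x‖ ^ 2) μ :=
    integrable_sq_mul_norm_gradient_sq μ hη.continuous hηc hu₁
  have hφu : Integrable (fun x => ⟪∇ φ x, ∇ u x⟫_ℝ) μ :=
    ((continuous_gradient hφ).inner (continuous_gradient hu₁)).integrable_of_hasCompactSupport <|
      (hasCompactSupport_gradient hφc).mono fun x hx h0 => hx (by simp [h0])
  have huη : Integrable (fun x => u x ^ 2 * ‖∇ η x‖ ^ 2) μ :=
    ((hu.continuous.pow 2).mul ((continuous_gradient hη).norm.pow 2))
      |>.integrable_of_hasCompactSupport <|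
      (hasCompactSupport_gradient hηc).mono fun x hx h0 => hx (by simp [h0])
  calc ∫ x, η x ^ 2 * ‖∇ u x‖ ^ 2 ∂μ
      ≤ ∫ x, (2 * ⟪∇ φ x, ∇ u x⟫_ℝ + 4 * (u x ^ 2 * ‖∇ η x‖ ^ 2)) ∂μ :=
        integral_mono hηu ((hφu.const_mul 2).add (huη.const_mul 4)) fun x => by
          simpa only [h_grad] using sq_mul_norm_sq_le_inner_add (η x) (u x) (∇ u x) (∇ η x)
    _ = 4 * ∫ x, u x ^ 2 * ‖∇ η x‖ ^ 2 ∂μ := by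
        rw [integral_add (hφu.const_mul 2) (huη.const_mul 4), integral_const_mul,
          integral_const_mul, h_green, mul_zero, zero_add]

theorem exists_setIntegral_norm_gradient_sq_le :
    ∃ C : ℝ, ∀ u : E → ℝ, ContDiff ℝ 2 u → Δ u = 0 → ∀ R > 0,
      ∫ x in closedBall 0 R, ‖∇ u x‖ ^ 2 ∂μ ≤
        C / R ^ 2 * ∫ x in closedBall 0 (2 * R), u x ^ 2 ∂μ := by
  obtain ⟨M, hM⟩ := exists_cutoff_norm_gradient_le E
  refine ⟨4 * M ^ 2, fun u hu hΔ R hR => ?_⟩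
  obtain ⟨η, hη, hη_supp, hη_one, hη_grad⟩ := hM R hR
  have hηc : HasCompactSupport η :=
    (isCompact_closedBall 0 (2 * R)).of_isClosed_subset (isClosed_tsupport _) hη_supp
  have h_int : Integrable (fun x => η x ^ 2 * ‖∇ u x‖ ^ 2) μ :=
    integrable_sq_mul_norm_gradient_sq μ hη.continuous hηc (hu.of_le one_le_two)
  have h_intOn {g : E → ℝ} (hg : Continuous g) :
      IntegrableOn (fun x => u x ^ 2 * g x ^ 2) (closedBall 0 (2 * R)) μ :=
    ((hu.continuous.pow 2).mul (hg.pow 2)).continuousOn.integrableOn_compact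
      (isCompact_closedBall 0 _)
  have h_outside (x : E) (hx : x ∉ closedBall 0 (2 * R)) : u x ^ 2 * ‖∇ η x‖ ^ 2 = 0 := by
    have h0 : ∇ η x = 0 :=
      image_eq_zero_of_notMem_tsupport fun h => hx (hη_supp (tsupport_gradient_subset η h))
    simp [h0]
  calc ∫ x in closedBall 0 R, ‖∇ u x‖ ^ 2 ∂μ
      = ∫ x in closedBall 0 R, η x ^ 2 * ‖∇ u x‖ ^ 2 ∂μ :=
        setIntegral_congr_fun measurableSet_closedBall fun x hx => by simp [hη_one x hx]
    _ ≤ ∫ x, η x ^ 2 * ‖∇ u x‖ ^ 2 ∂μ :=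
        setIntegral_le_integral h_int (.of_forall fun x => by positivity)
    _ ≤ 4 * ∫ x, u x ^ 2 * ‖∇ η x‖ ^ 2 ∂μ :=
        integral_sq_mul_norm_gradient_sq_le μ hu hΔ hη hηc
    _ = 4 * ∫ x in closedBall 0 (2 * R), u x ^ 2 * ‖∇ η x‖ ^ 2 ∂μ := by
        rw [setIntegral_eq_integral_of_forall_compl_eq_zero h_outside]
    _ ≤ 4 * ∫ x in closedBall 0 (2 * R), u x ^ 2 * (M / R) ^ 2 ∂μ := by
        gcongr 4 * ?_
        refine setIntegral_mono (h_intOn (continuous_gradient hη).norm)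
          (h_intOn continuous_const) fun x => ?_
        dsimp only
        gcongr
        exact hη_grad x
    _ = 4 * M ^ 2 / R ^ 2 * ∫ x in closedBall 0 (2 * R), u x ^ 2 ∂μ := by
        rw [integral_mul_const]
        ring

theorem isBigO_setIntegral_fderiv_apply_sq {u : E → ℝ} (hu : ContDiff ℝ 2 u) (hΔ : Δ u = 0)
    {s : ℤ} (hs : (fun R : ℝ => ∫ x in closedBall 0 R, u x ^ 2 ∂μ) =O[atTop] (· ^ s)) (v : E) :
    (fun R : ℝ => ∫ x in closedBall 0 R, fderiv ℝ u x v ^ 2 ∂μ) =O[atTop] (· ^ (s - 2)) := by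
  obtain ⟨C, hC⟩ := exists_setIntegral_norm_gradient_sq_le μ
  have h_double : (fun R : ℝ => ∫ x in closedBall 0 (2 * R), u x ^ 2 ∂μ) =O[atTop] (· ^ s) := by
    refine (hs.comp_tendsto (tendsto_id.const_mul_atTop two_pos)).trans ?_
    simpa [Function.comp_def, mul_zpow] using isBigO_const_mul_self ((2 : ℝ) ^ s) (· ^ s) atTop
  calc (fun R : ℝ => ∫ x in closedBall 0 R, fderiv ℝ u x v ^ 2 ∂μ)
      =O[atTop] fun R => ‖v‖ ^ 2 * (C / R ^ 2 * ∫ x in closedBall 0 (2 * R), u x ^ 2 ∂μ) := by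
        refine .of_norm_eventuallyLE ?_
        filter_upwards [eventually_gt_atTop 0] with R hR
        rw [Real.norm_of_nonneg (by positivity)]
        exact (setIntegral_fderiv_apply_sq_le μ (hu.of_le one_le_two)
          (isCompact_closedBall 0 R) v).trans (by gcongr; exact hC u hu hΔ R hR)
    _ =O[atTop] fun R => (R ^ 2)⁻¹ * R ^ s := by
        simp only [div_eq_mul_inv, mul_assoc]
        exact (((isBigO_refl _ _).mul h_double).const_mul_left C).const_mul_left (‖v‖ ^ 2)
    _ =ᶠ[atTop] (· ^ (s - 2)) := by
        filter_upwards [eventually_ne_atTop 0] with R hR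
        rw [zpow_sub₀ hR, div_eq_inv_mul]
        norm_cast

end Caccioppoli

section Growth

theorem eq_zero_of_tendsto_setIntegral_sq_closedBall {X : Type*} [MetricSpace X]
    [ProperSpace X] [MeasurableSpace X] [OpensMeasurableSpace X] (μ : Measure X)
    [IsFiniteMeasureOnCompacts μ] [μ.IsOpenPosMeasure] (c : X) {u : X → ℝ} (hu : Continuous u)
    (h : Tendsto (fun R : ℝ => ∫ x in closedBall c R, u x ^ 2 ∂μ) atTop (𝓝 0)) : u = 0 := by
  have h_cover : AECover μ atTop fun R : ℝ => closedBall c R := aecover_closedBall tendsto_id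
  have h_nonneg : ∀ x, 0 ≤ u x ^ 2 := fun x => sq_nonneg _
  have h_int : Integrable (fun x => u x ^ 2) μ :=
    h_cover.integrable_of_integral_tendsto_of_nonneg_ae 0
      (fun R => (hu.pow 2).continuousOn.integrableOn_compact (isCompact_closedBall c R))
      (.of_forall h_nonneg) h
  have h_zero : ∫ x, u x ^ 2 ∂μ = 0 :=
    tendsto_nhds_unique (h_cover.integral_tendsto_of_countably_generated h_int) h
  have h_sq : (fun x => u x ^ 2) = 0 :=
    ((hu.pow 2).ae_eq_iff_eq μ continuous_zero).1 <|
      (integral_eq_zero_iff_of_nonneg h_nonneg h_int).1 h_zero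
  exact funext fun x => pow_eq_zero_iff two_ne_zero |>.1 (congrFun h_sq x)

theorem iteratedFDeriv_eq_zero_of_isBigO_setIntegral_sq {E : Type*} [NormedAddCommGroup E]
    [InnerProductSpace ℝ E] [FiniteDimensional ℝ E] [MeasurableSpace E] [BorelSpace E]
    (μ : Measure E) [μ.IsAddHaarMeasure] {m : ℕ} {s : ℤ} (hsm : s < 2 * m)
    {u : E → ℝ} (hu : ContDiff ℝ ∞ u) (hΔ : Δ u = 0)
    (hs : (fun R : ℝ => ∫ x in closedBall 0 R, u x ^ 2 ∂μ) =O[atTop] (· ^ s)) :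
    iteratedFDeriv ℝ m u = 0 := by
  induction m generalizing s u with
  | zero =>
    have h0 : u = 0 := eq_zero_of_tendsto_setIntegral_sq_closedBall μ 0 hu.continuous <|
      hs.trans_tendsto (tendsto_zpow_atTop_zero (by simpa using hsm))
    ext
    simp [h0]
  | succ m ih =>
    have h_ih (v : E) : iteratedFDeriv ℝ m (fun x => fderiv ℝ u x v) = 0 := by
      refine ih (s := s - 2) (by push_cast at hsm; linarith)
        (contDiff_fderiv_apply hu le_rfl v) ?_
        (isBigO_setIntegral_fderiv_apply_sq μ (hu.of_le ENat.LEInfty.out) hΔ hs v)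
      rw [laplacian_fderiv_apply (hu.of_le ENat.LEInfty.out), hΔ]
      simp [Pi.zero_def]
    ext x w
    rw [iteratedFDeriv_succ_apply_right, ← iteratedFDeriv_clm_apply_const_apply
      (hu.fderiv_right (m := ∞) le_rfl) (mod_cast le_top), h_ih]
    rfl

theorem exists_forall_norm_le_mul_pow {E F : Type*} [NormedAddCommGroup E] [ProperSpace E]
    [NormedAddCommGroup F] {u : E → F} (hu : Continuous u) {k : ℕ}
    (h : u =O[cobounded E] fun x => ‖x‖ ^ k) :
    ∃ A : ℝ, ∀ R ≥ 1, ∀ x ∈ closedBall 0 R, ‖u x‖ ≤ A * R ^ k := by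
  obtain ⟨A, hA, h_outer⟩ := h.exists_pos
  obtain ⟨r, -, hr⟩ := hasBasis_cobounded_norm.eventually_iff.1 h_outer.bound
  obtain ⟨B, hB⟩ := (isCompact_closedBall (0 : E) r).exists_bound_of_continuousOn hu.continuousOn
  refine ⟨max A B, fun R hR x hx => ?_⟩
  rw [mem_closedBall_zero_iff] at hx
  rcases le_total r ‖x‖ with hrx | hxr
  · calc ‖u x‖ ≤ A * ‖x‖ ^ k := by simpa using hr hrx
      _ ≤ max A B * R ^ k := by gcongr; exact le_max_left A B
  · calc ‖u x‖ ≤ max A B := (hB x (by simpa using hxr)).trans (le_max_right A B)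
      _ ≤ max A B * R ^ k := le_mul_of_one_le_right (hA.le.trans (le_max_left A B))
        (one_le_pow₀ hR)

theorem isBigO_setIntegral_sq_of_isBigO_cobounded {E : Type*} [NormedAddCommGroup E]
    [NormedSpace ℝ E] [FiniteDimensional ℝ E] [MeasurableSpace E] [BorelSpace E] (μ : Measure E)
    [μ.IsAddHaarMeasure] {u : E → ℝ} (hu : Continuous u) {k : ℕ}
    (h : u =O[cobounded E] fun x => ‖x‖ ^ k) :
    (fun R : ℝ => ∫ x in closedBall 0 R, u x ^ 2 ∂μ) =O[atTop]
      (· ^ (2 * k + finrank ℝ E : ℤ)) := by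
  obtain ⟨A, hA⟩ := exists_forall_norm_le_mul_pow hu h
  refine .of_bound (A ^ 2 * μ.real (ball 0 1)) ?_
  filter_upwards [eventually_ge_atTop 1] with R hR
  have hR₀ : 0 ≤ R := zero_le_one.trans hR
  calc ‖∫ x in closedBall 0 R, u x ^ 2 ∂μ‖
      ≤ (A * R ^ k) ^ 2 * μ.real (closedBall 0 R) := by
        refine norm_setIntegral_le_of_norm_le_const measure_closedBall_lt_top fun x hx => ?_
        rw [norm_pow]
        gcongr
        exact hA R hR x hx
    _ = A ^ 2 * μ.real (ball 0 1) * ‖R ^ (2 * k + finrank ℝ E : ℤ)‖ := by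
        rw [μ.addHaar_real_closedBall 0 hR₀, Real.norm_of_nonneg (by positivity)]
        norm_cast
        ring

theorem isBigO_cobounded_of_norm_sub_le {E F : Type*} [NormedAddCommGroup E]
    [NormedAddCommGroup F] {f : E → F} {a : F} {C : ℝ} {k : ℕ}
    (h : ∀ x, ‖f x - a‖ ≤ C * ‖x‖ ^ k) : f =O[cobounded E] fun x => ‖x‖ ^ k := by
  have h_sub : (fun x => f x - a) =O[cobounded E] fun x => ‖x‖ ^ k :=
    .of_bound C (.of_forall fun x => by simpa using h x)
  have h_const : (fun _ : E => a) =O[cobounded E] fun x => ‖x‖ ^ k := by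
    refine .of_bound ‖a‖ ?_
    filter_upwards [tendsto_norm_cobounded_atTop.eventually_ge_atTop 1] with x hx
    simpa using le_mul_of_one_le_right (norm_nonneg a) (one_le_pow₀ hx)
  simpa using h_sub.add h_const

end Growth

section Taylor

variable {E F ι : Type*} [NormedAddCommGroup E] [NormedSpace ℝ E]

theorem eq_sum_iteratedFDeriv_of_iteratedFDeriv_succ_eq_zero [NormedAddCommGroup F]
    [NormedSpace ℝ F] [CompleteSpace F] {f : E → F} {m : ℕ} (hf : ContDiff ℝ (m + 1) f)
    (h : iteratedFDeriv ℝ (m + 1) f = 0) (x y : E) :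
    f (x + y) = ∑ j ∈ Finset.range (m + 1),
      (j.factorial : ℝ)⁻¹ • iteratedFDeriv ℝ j f x (fun _ => y) := by
  simpa [h] using map_add_eq_sum_add_integral_iteratedFDeriv (x := x) (y := y)
    fun _ _ => hf.contDiffAt

theorem exists_mvPolynomial_of_multilinearMap {R M : Type*} [CommRing R] [AddCommGroup M]
    [Module R M] [Finite ι] (b : Basis ι R M) {j : ℕ}
    (g : MultilinearMap R (fun _ : Fin j => M) R) :
    ∃ p : MvPolynomial ι R, ∀ x, g (fun _ => x) = MvPolynomial.eval (b.equivFun x) p := by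
  classical
  cases nonempty_fintype ι
  refine ⟨∑ f : Fin j → ι, MvPolynomial.C (g (b ∘ f)) * ∏ l, MvPolynomial.X (f l), fun x => ?_⟩
  calc g (fun _ => x) = g fun _ => ∑ i, b.equivFun x i • b i := by rw [b.sum_equivFun]
    _ = ∑ f : Fin j → ι, (∏ l, b.equivFun x (f l)) • g (b ∘ f) := by
      simp only [g.map_sum, g.map_smul_univ, Function.comp_def]
    _ = _ := by simp [mul_comm]

theorem exists_mvPolynomial_of_iteratedFDeriv_succ_eq_zero [Finite ι] (b : Basis ι ℝ E)
    {f : E → ℝ} {m : ℕ} (hf : ContDiff ℝ (m + 1) f) (h : iteratedFDeriv ℝ (m + 1) f = 0) :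
    ∃ p : MvPolynomial ι ℝ, ∀ x, f x = MvPolynomial.eval (b.equivFun x) p := by
  have h_diag (j : ℕ) : ∃ p : MvPolynomial ι ℝ, ∀ x,
      iteratedFDeriv ℝ j f 0 (fun _ => x) = MvPolynomial.eval (b.equivFun x) p :=
    exists_mvPolynomial_of_multilinearMap b (iteratedFDeriv ℝ j f 0).toMultilinearMap
  choose p hp using h_diag
  refine ⟨∑ j ∈ Finset.range (m + 1), MvPolynomial.C (j.factorial : ℝ)⁻¹ * p j, fun x => ?_⟩
  rw [← zero_add x, eq_sum_iteratedFDeriv_of_iteratedFDeriv_succ_eq_zero hf h 0 x, zero_add]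
  simp only [hp, smul_eq_mul, map_sum, map_mul, MvPolynomial.eval_C]

end Taylor

section Degree

variable {R ι : Type*} [CommSemiring R]

theorem eval_smul_of_isHomogeneous {p : MvPolynomial ι R} {j : ℕ} (hp : p.IsHomogeneous j)
    (t : R) (c : ι → R) :
    MvPolynomial.eval (t • c) p = t ^ j * MvPolynomial.eval c p := by
  rw [MvPolynomial.eval_eq, MvPolynomial.eval_eq, Finset.mul_sum]
  refine Finset.sum_congr rfl fun d hd => ?_
  have h_deg : ∑ i ∈ d.support, d i = j := by
    simpa [Finsupp.weight_apply, Finsupp.sum] using hp (MvPolynomial.mem_support_iff.1 hd)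
  simp only [Pi.smul_apply, smul_eq_mul, mul_pow, Finset.prod_mul_distrib,
    Finset.prod_pow_eq_pow_sum, h_deg]
  ring

theorem exists_polynomial_eval_smul (p : MvPolynomial ι R) (c : ι → R) :
    ∃ q : R[X], (∀ t, q.eval t = MvPolynomial.eval (t • c) p) ∧
      ∀ j, q.coeff j = MvPolynomial.eval c (p.homogeneousComponent j) := by
  refine ⟨∑ j ∈ Finset.range (p.totalDegree + 1),
    Polynomial.C (MvPolynomial.eval c (p.homogeneousComponent j)) * Polynomial.X ^ j,
    fun t => ?_, fun j => ?_⟩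
  · conv_rhs => rw [← p.sum_homogeneousComponent]
    simp only [Polynomial.eval_finsetSum, map_sum, Polynomial.eval_mul, Polynomial.eval_C,
      Polynomial.eval_pow, Polynomial.eval_X, mul_comm _ (t ^ _),
      eval_smul_of_isHomogeneous (p.homogeneousComponent_isHomogeneous _)]
  · simp +contextual [p.homogeneousComponent_eq_zero j]

theorem natDegree_le_of_eval_isBigO {q : ℝ[X]} {k : ℕ} (h : q.eval =O[atTop] (· ^ k)) :
    q.natDegree ≤ k := by
  by_contra! hk
  have h_little : (· ^ k) =o[atTop] q.eval := by
    simpa using Polynomial.isLittleO_atTop_of_degree_lt (Polynomial.X ^ k) q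
      (Polynomial.degree_lt_degree (by simpa using hk))
  have hq : q ≠ 0 := by
    rintro rfl
    simp at hk
  exact isLittleO_irrefl (q.eventually_atTop_not_isRoot hq).frequently (h.trans_isLittleO h_little)

theorem isBigO_comp_smul_of_isBigO_cobounded {E F : Type*} [NormedAddCommGroup E]
    [NormedSpace ℝ E] [Norm F] {f : E → F} {k : ℕ} (h : f =O[cobounded E] fun x => ‖x‖ ^ k)
    {x : E} (hx : x ≠ 0) : (fun t : ℝ => f (t • x)) =O[atTop] (· ^ k) := by
  have h_ray : Tendsto (fun t : ℝ => t • x) atTop (cobounded E) := by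
    rw [← tendsto_norm_atTop_iff_cobounded]
    simpa [norm_smul] using tendsto_abs_atTop_atTop.atTop_mul_const (norm_pos_iff.2 hx)
  refine (h.comp_tendsto h_ray).trans (.of_bound (‖x‖ ^ k) (.of_forall fun t => ?_))
  simp [norm_smul, mul_pow, mul_comm]

theorem totalDegree_le_of_isBigO_cobounded {E : Type*} [NormedAddCommGroup E] [NormedSpace ℝ E]
    [Finite ι] (b : Basis ι ℝ E) {p : MvPolynomial ι ℝ} {k : ℕ}
    (h : (fun x => MvPolynomial.eval (b.equivFun x) p) =O[cobounded E] fun x => ‖x‖ ^ k) :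
    p.totalDegree ≤ k := by
  have h_component (j : ℕ) (hj : k < j) : p.homogeneousComponent j = 0 := by
    refine MvPolynomial.funext fun c => ?_
    obtain ⟨x, rfl⟩ := b.equivFun.surjective c
    rw [map_zero]
    rcases eq_or_ne x 0 with rfl | hx
    · simpa [(Nat.zero_le k |>.trans_lt hj).ne'] using
        eval_smul_of_isHomogeneous (p.homogeneousComponent_isHomogeneous j) 0 0
    · obtain ⟨q, hq_eval, hq_coeff⟩ := exists_polynomial_eval_smul p (b.equivFun x)
      have hq : q.natDegree ≤ k := natDegree_le_of_eval_isBigO <| by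
        simpa only [hq_eval, map_smul] using isBigO_comp_smul_of_isBigO_cobounded h hx
      rw [← hq_coeff, Polynomial.coeff_eq_zero_of_natDegree_lt (hq.trans_lt hj)]
  refine Finset.sup_le fun d hd => ?_
  by_contra! hkd
  have h_coeff := MvPolynomial.coeff_homogeneousComponent d.degree p d
  rw [h_component d.degree hkd] at h_coeff
  exact MvPolynomial.mem_support_iff.1 hd (by simpa using h_coeff.symm)

end Degree

theorem stmt_4_general {E ι : Type*} [NormedAddCommGroup E] [InnerProductSpace ℝ E]
    [FiniteDimensional ℝ E] (b : Basis ι ℝ E) {h : E → ℝ} (hsmooth : ContDiff ℝ ∞ h)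
    (hharm : Δ h = 0) {k : ℕ} (hgrowth : h =O[cobounded E] fun x => ‖x‖ ^ k) :
    ∃ p : MvPolynomial ι ℝ, p.totalDegree ≤ k ∧ ∀ x, h x = MvPolynomial.eval (b.repr x) p := by
  have : Finite ι := Module.Finite.finite_basis b
  borelize E
  have h_deriv : iteratedFDeriv ℝ (k + finrank ℝ E + 1) h = 0 :=
    iteratedFDeriv_eq_zero_of_isBigO_setIntegral_sq volume (by push_cast; lia) hsmooth hharm
      (isBigO_setIntegral_sq_of_isBigO_cobounded volume hsmooth.continuous hgrowth)
  obtain ⟨p, hp⟩ := exists_mvPolynomial_of_iteratedFDeriv_succ_eq_zero b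
    (hsmooth.of_le (mod_cast le_top)) h_deriv
  exact ⟨p, totalDegree_le_of_isBigO_cobounded b (by simpa only [← hp] using hgrowth), hp⟩

theorem stmt_4 (n : ℕ) (h : EuclideanSpace ℝ (Fin n) → ℝ)
    (hsmooth : ContDiff ℝ (⊤ : ℕ∞) h)
    (hharm : ∀ x : EuclideanSpace ℝ (Fin n),
      ∑ i : Fin n, fderiv ℝ (fun y => fderiv ℝ h y (EuclideanSpace.single i 1)) x
        (EuclideanSpace.single i 1) = 0)
    (C : ℝ) (hC : 0 < C) (k : ℕ) (hk : 0 < k)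
    (hbound : ∀ x : EuclideanSpace ℝ (Fin n), |h x - h 0| ≤ C * ‖x‖ ^ k) :
    ∃ p : MvPolynomial (Fin n) ℝ, p.totalDegree ≤ k ∧
      ∀ x : EuclideanSpace ℝ (Fin n), h x = MvPolynomial.eval (fun i => x i) p := by
  let b := EuclideanSpace.basisFun (Fin n) ℝ
  have hΔ : Δ h = 0 := by
    rw [laplacian_eq_sum_fderiv_fderiv b (hsmooth.of_le ENat.LEInfty.out)]
    exact funext fun x => by simpa [b] using hharm x
  exact stmt_4_general b.toBasis hsmooth hΔ (isBigO_cobounded_of_norm_sub_le hbound)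
end

section
/- Let A = [[a, b], [c, d]] be a real 2×2 matrix with a + d ≠ 0 and b − c ≠ 0. Define α = ((a+d)/((a+d)² + (b−c)²))·(a(a+d) − c(b−c)) and β = ((a+d)/((a+d)² + (b−c)²))·(c(a+d) + a(b−c)), and set P := −[[α, β], [β, a + d − α]]. Then P is symmetric, trace(P) = −trace(A), and P satisfies the algebraic Riccati equation 2P² + AᵀP + PA = 0; hence A = −P + H with H := A + P is a strictly orthogonal HHD of matrices. -/
open Matrix

/-!
For a real `2 × 2` matrix `A` put `t = tr A`, `w = A₀₁ - A₁₀`, and let `J` be the quarter turn, so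
that `J² = -1`. The matrix `M = (t - w J) A` is symmetric, because the antisymmetric parts of `t A`
and `w J A` are both `(t w / 2) J`. Since `(t + w J) (t - w J) = t² + w²`, this writes `A` as a
polar-type product `A = (t² + w²)⁻¹ (t + w J) M`. Its two summands are `-P` and `H`: the matrix
`M J M` is antisymmetric because `J` is, which is the orthogonality relation, and `tr (J M) = 0`
because `J` is antisymmetric and `M` symmetric.
-/

section Decomposition

variable {n R : Type*} [Fintype n]

/-- A strictly orthogonal Helmholtz–Hodge decomposition (HHD) of a square matrix `A` into a
symmetric part `-P` that carries the trace and a traceless part `H`. The summand `H` is kept as an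
argument of its own, although it is determined by `A` and `P`. -/
structure IsStrictlyOrthogonalHHD [Ring R] (A P H : Matrix n n R) : Prop where
  eq_neg_add : A = -P + H
  isSymm : P.IsSymm
  trace_eq : P.trace = -A.trace
  trace_eq_zero : H.trace = 0
  orthogonal : P * H + Hᵀ * P = 0

theorem IsStrictlyOrthogonalHHD.eq_add [Ring R] {A P H : Matrix n n R}
    (h : IsStrictlyOrthogonalHHD A P H) : H = A + P := by
  rw [h.eq_neg_add]
  abel

theorem IsStrictlyOrthogonalHHD.riccati [DecidableEq n] [Ring R] {A P H : Matrix n n R}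
    (h : IsStrictlyOrthogonalHHD A P H) : 2 * P ^ 2 + Aᵀ * P + P * A = 0 := by
  rw [← h.orthogonal, h.eq_add, transpose_add, h.isSymm.eq]
  noncomm_ring

theorem mul_mul_add_transpose_mul_eq_zero [CommRing R] {S M : Matrix n n R} (hS : Sᵀ = -S)
    (hM : M.IsSymm) : M * (S * M) + (S * M)ᵀ * M = 0 := by
  rw [transpose_mul, hS, hM.eq]
  noncomm_ring

theorem isStrictlyOrthogonalHHD_smul_add_mul [CommRing R] {S M : Matrix n n R} (p : R)
    (hS : Sᵀ = -S) (hM : M.IsSymm) (htr : (S * M).trace = 0) :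
    IsStrictlyOrthogonalHHD (p • M + S * M) (-(p • M)) (S * M) where
  eq_neg_add := by rw [neg_neg]
  isSymm := (hM.smul p).neg
  trace_eq := by rw [trace_add, htr, add_zero, trace_neg]
  trace_eq_zero := htr
  orthogonal := by
    rw [neg_mul, mul_neg, ← neg_add, smul_mul_assoc, mul_smul_comm, ← smul_add,
      mul_mul_add_transpose_mul_eq_zero hS hM, smul_zero, neg_zero]

end Decomposition

section TwoByTwo

variable {R : Type*} [CommRing R]

variable (R) in
/-- The matrix of the clockwise rotation of the plane by a right angle, which plays the role of the
imaginary unit. -/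
def quarterTurn : Matrix (Fin 2) (Fin 2) R := !![0, 1; -1, 0]

theorem transpose_quarterTurn : (quarterTurn R)ᵀ = -quarterTurn R := by
  ext i j
  fin_cases i <;> fin_cases j <;> simp [quarterTurn]

theorem quarterTurn_mul_self : quarterTurn R * quarterTurn R = -1 := by
  ext i j
  fin_cases i <;> fin_cases j <;> simp [quarterTurn]

theorem trace_quarterTurn_mul {M : Matrix (Fin 2) (Fin 2) R} (hM : M.IsSymm) :
    (quarterTurn R * M).trace = 0 := by
  rw [eta_fin_two M, quarterTurn, mul_fin_two, trace_fin_two_of, hM.apply 0 1]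
  ring

theorem smul_one_add_mul_smul_one_sub_quarterTurn (t w : R) :
    (t • 1 + w • quarterTurn R) * (t • 1 - w • quarterTurn R) = (t ^ 2 + w ^ 2) • 1 := by
  rw [add_mul, mul_sub, mul_sub]
  simp only [smul_mul_smul_comm, one_mul, mul_one, quarterTurn_mul_self, mul_comm w t]
  module

/-- The product `(t - w J) A`, where `t = tr A`, `w = A₀₁ - A₁₀` and `J` is the quarter turn:
a symmetric matrix obtained from `A` by a rotation and a scaling. -/
def rotatedSymmetrization (A : Matrix (Fin 2) (Fin 2) R) : Matrix (Fin 2) (Fin 2) R :=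
  (A.trace • 1 - (A 0 1 - A 1 0) • quarterTurn R) * A

theorem rotatedSymmetrization_of (a b c d : R) :
    rotatedSymmetrization !![a, b; c, d] =
      !![a * (a + d) - c * (b - c), c * (a + d) + a * (b - c);
        c * (a + d) + a * (b - c), d * (a + d) + b * (b - c)] := by
  ext i j
  fin_cases i <;> fin_cases j <;>
    simp [rotatedSymmetrization, quarterTurn, one_fin_two, trace_fin_two] <;> ring

theorem isSymm_rotatedSymmetrization (A : Matrix (Fin 2) (Fin 2) R) :
    (rotatedSymmetrization A).IsSymm := by
  rw [eta_fin_two A, rotatedSymmetrization_of]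
  exact IsSymm.ext_iff.2 (by simp [Fin.forall_fin_two])

theorem smul_add_smul_quarterTurn_mul_rotatedSymmetrization (A : Matrix (Fin 2) (Fin 2) R) :
    A.trace • rotatedSymmetrization A +
        (A 0 1 - A 1 0) • (quarterTurn R * rotatedSymmetrization A) =
      (A.trace ^ 2 + (A 0 1 - A 1 0) ^ 2) • A := by
  set t := A.trace with ht
  set w := A 0 1 - A 1 0 with hw
  calc t • rotatedSymmetrization A + w • (quarterTurn R * rotatedSymmetrization A)
      = (t • 1 + w • quarterTurn R) * rotatedSymmetrization A := by
        rw [add_mul, smul_mul_assoc, smul_mul_assoc, one_mul]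
    _ = (t ^ 2 + w ^ 2) • A := by
        rw [rotatedSymmetrization, ← ht, ← hw, ← mul_assoc,
          smul_one_add_mul_smul_one_sub_quarterTurn, smul_mul_assoc, one_mul]

end TwoByTwo

section Field

variable {K : Type*} [Field K]

theorem isStrictlyOrthogonalHHD_rotatedSymmetrization (A : Matrix (Fin 2) (Fin 2) K)
    {D : K} (hD : D = A.trace ^ 2 + (A 0 1 - A 1 0) ^ 2) (hD₀ : D ≠ 0) :
    IsStrictlyOrthogonalHHD A (-((A.trace / D) • rotatedSymmetrization A))
      (((A 0 1 - A 1 0) / D) • quarterTurn K * rotatedSymmetrization A) := by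
  have hM := isSymm_rotatedSymmetrization A
  have hA : A = (A.trace / D) • rotatedSymmetrization A +
      ((A 0 1 - A 1 0) / D) • quarterTurn K * rotatedSymmetrization A := by
    rw [smul_mul_assoc, div_eq_inv_mul, div_eq_inv_mul, mul_smul, mul_smul, ← smul_add,
      smul_add_smul_quarterTurn_mul_rotatedSymmetrization, ← hD, inv_smul_smul₀ hD₀]
  have h := isStrictlyOrthogonalHHD_smul_add_mul (S := ((A 0 1 - A 1 0) / D) • quarterTurn K)
    (A.trace / D) (by rw [transpose_smul, transpose_quarterTurn, smul_neg]) hM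
    (by rw [smul_mul_assoc, trace_smul, trace_quarterTurn_mul hM, smul_zero])
  rwa [← hA] at h

theorem smul_rotatedSymmetrization_of {a b c d α β : K} (hD : (a + d) ^ 2 + (b - c) ^ 2 ≠ 0)
    (hα : α = (a + d) / ((a + d) ^ 2 + (b - c) ^ 2) * (a * (a + d) - c * (b - c)))
    (hβ : β = (a + d) / ((a + d) ^ 2 + (b - c) ^ 2) * (c * (a + d) + a * (b - c))) :
    ((a + d) / ((a + d) ^ 2 + (b - c) ^ 2)) • rotatedSymmetrization !![a, b; c, d] =
      !![α, β; β, a + d - α] := by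
  have htrace : a + d - α =
      (a + d) / ((a + d) ^ 2 + (b - c) ^ 2) * (d * (a + d) + b * (b - c)) := by
    rw [hα]
    field_simp
    ring
  rw [rotatedSymmetrization_of, htrace, hα, hβ]
  simp only [smul_of, smul_cons, smul_empty, smul_eq_mul]

theorem stmt_9_general (a b c d : K) (hD : (a + d) ^ 2 + (b - c) ^ 2 ≠ 0)
    (A P : Matrix (Fin 2) (Fin 2) K)
    (hA : A = !![a, b; c, d])
    (α β : K)
    (hα : α = (a + d) / ((a + d) ^ 2 + (b - c) ^ 2) * (a * (a + d) - c * (b - c)))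
    (hβ : β = (a + d) / ((a + d) ^ 2 + (b - c) ^ 2) * (c * (a + d) + a * (b - c)))
    (hP : P = -!![α, β; β, a + d - α]) :
    P.IsSymm ∧ P.trace = -A.trace ∧
    2 * P ^ 2 + Aᵀ * P + P * A = 0 ∧
    A = -P + (A + P) ∧ (A + P).trace = 0 ∧
    P * (A + P) + (A + P)ᵀ * P = 0 := by
  have htrace : A.trace = a + d := by rw [hA, trace_fin_two_of]
  have hskew : A 0 1 - A 1 0 = b - c := by simp [hA]
  have h := isStrictlyOrthogonalHHD_rotatedSymmetrization A (by rw [htrace, hskew]) hD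
  rw [htrace, hA, smul_rotatedSymmetrization_of hD hα hβ, ← hP, ← hA] at h
  rw [← h.eq_add]
  exact ⟨h.isSymm, h.trace_eq, h.riccati, h.eq_neg_add, h.trace_eq_zero, h.orthogonal⟩

end Field

theorem stmt_9 (a b c d : ℝ) (htr : a + d ≠ 0) (hbc : b - c ≠ 0)
    (A P : Matrix (Fin 2) (Fin 2) ℝ)
    (hA : A = !![a, b; c, d])
    (α β : ℝ)
    (hα : α = (a + d) / ((a + d) ^ 2 + (b - c) ^ 2) * (a * (a + d) - c * (b - c)))
    (hβ : β = (a + d) / ((a + d) ^ 2 + (b - c) ^ 2) * (c * (a + d) + a * (b - c)))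
    (hP : P = -!![α, β; β, a + d - α]) :
    P.IsSymm ∧ P.trace = -A.trace ∧
    2 * P ^ 2 + Aᵀ * P + P * A = 0 ∧
    A = -P + (A + P) ∧ (A + P).trace = 0 ∧
    P * (A + P) + (A + P)ᵀ * P = 0 := by
  exact stmt_9_general a b c d (by positivity) A P hA α β hα hβ hP
end

section
/- For every real 2×2 matrix A there exists a symmetric real 2×2 matrix P with trace(P) = −trace(A) satisfying 2P² + AᵀP + PA = 0; equivalently, every linear vector field F(x) = A x on ℝ² admits a strictly orthogonal Helmholtz–Hodge decomposition. -/
/-!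
If `P` is symmetric and `K` is skew-symmetric, then `A = -P + KP` is a strictly orthogonal
decomposition: `tr (KP) = 0`, and `P(KP) + (KP)ᵀP = PKP - PKP = 0`. So it suffices to solve
`A = (K - 1) P` with `P` symmetric. In dimension two, write `K = sJ` with `J² = -1`; then
`(1 - sJ)(1 + sJ) = 1 + s²`, which forces `P = -(1 + s²)⁻¹ (1 + sJ) A`. The skew part of
`(1 + sJ) A` is `(A₀₁ - A₁₀ + s tr A) / 2` times `J`, so a suitable `s` exists if `tr A ≠ 0`;
if `tr A = 0`, take `P = 0`.
-/

open Matrix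

section SkewSymmetric

variable {n R : Type*} [Fintype n] [CommRing R] {P K : Matrix n n R}

theorem trace_mul_eq_zero_of_transpose_eq_neg [NoZeroDivisors R] [NeZero (2 : R)]
    (hK : Kᵀ = -K) (hP : P.IsSymm) : (K * P).trace = 0 := by
  have trace_eq_neg : (K * P).trace = -(K * P).trace :=
    calc (K * P).trace = (Pᵀ * Kᵀ).trace := by rw [← transpose_mul, trace_transpose]
      _ = -(K * P).trace := by rw [hP.eq, hK, mul_neg, trace_neg, trace_mul_comm]
  have two_mul_trace : 2 * (K * P).trace = 0 := by linear_combination trace_eq_neg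
  exact (mul_eq_zero.mp two_mul_trace).resolve_left two_ne_zero

theorem riccati_of_transpose_eq_neg [DecidableEq n] (hK : Kᵀ = -K) (hP : P.IsSymm) :
    2 * P ^ 2 + (K * P - P)ᵀ * P + P * (K * P - P) = 0 := by
  rw [transpose_sub, transpose_mul, hP.eq, hK]
  noncomm_ring

end SkewSymmetric

theorem one_add_sq_ne_zero_of_not_isSquare {R : Type*} [CommRing R]
    (hR : ¬IsSquare (-1 : R)) (s : R) : 1 + s ^ 2 ≠ 0 :=
  fun h ↦ hR ⟨s, by linear_combination -h⟩

/-- The general skew-symmetric `2 × 2` matrix `s J`, where `J = !![0, 1; -1, 0]`. -/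
def skewMatrix {R : Type*} [Zero R] [Neg R] (s : R) : Matrix (Fin 2) (Fin 2) R :=
  !![0, s; -s, 0]

section SkewMatrix

variable {R : Type*} [CommRing R]

theorem transpose_skewMatrix (s : R) : (skewMatrix s)ᵀ = -skewMatrix s := by
  ext i j
  fin_cases i <;> fin_cases j <;> simp [skewMatrix]

theorem one_sub_skewMatrix_mul_one_add_skewMatrix (s : R) :
    (1 - skewMatrix s) * (1 + skewMatrix s) = (1 + s ^ 2) • 1 := by
  ext i j
  fin_cases i <;> fin_cases j <;> simp [skewMatrix, mul_apply, sq, add_comm]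

theorem isSymm_one_add_skewMatrix_mul_iff (s : R) (A : Matrix (Fin 2) (Fin 2) R) :
    ((1 + skewMatrix s) * A).IsSymm ↔ A 0 1 - A 1 0 + s * A.trace = 0 := by
  have skew_part : ((1 + skewMatrix s) * A) 0 1 - ((1 + skewMatrix s) * A) 1 0 =
      A 0 1 - A 1 0 + s * A.trace := by
    rw [add_mul, one_mul]
    simp only [skewMatrix, Matrix.add_apply, mul_apply, Fin.sum_univ_two, of_apply,
      cons_val', cons_val_zero, cons_val_one, cons_val_fin_one, trace_fin_two]
    ring
  rw [← skew_part, sub_eq_zero, IsSymm.ext_iff]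
  simp [Fin.forall_fin_two, eq_comm]

end SkewMatrix

section Field

variable {F : Type*} [Field F]

theorem exists_isSymm_skewMatrix_mul_sub_eq (hF : ¬IsSquare (-1 : F))
    {A : Matrix (Fin 2) (Fin 2) F} (hA : A.trace ≠ 0) :
    ∃ (s : F) (P : Matrix (Fin 2) (Fin 2) F), P.IsSymm ∧ skewMatrix s * P - P = A := by
  let s := (A 1 0 - A 0 1) / A.trace
  have isSymm_mul : ((1 + skewMatrix s) * A).IsSymm := by
    rw [isSymm_one_add_skewMatrix_mul_iff, div_mul_cancel₀ _ hA]
    ring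
  let P := -((1 + s ^ 2)⁻¹ • ((1 + skewMatrix s) * A))
  refine ⟨s, P, (isSymm_mul.smul _).neg, ?_⟩
  calc
    skewMatrix s * P - P =
        (1 + s ^ 2)⁻¹ • ((1 - skewMatrix s) * (1 + skewMatrix s) * A) := by
      simp only [P, mul_neg, mul_smul_comm, sub_mul, one_mul, mul_assoc, smul_sub]
      abel
    _ = A := by
      rw [one_sub_skewMatrix_mul_one_add_skewMatrix, smul_mul_assoc, one_mul,
        inv_smul_smul₀ (one_add_sq_ne_zero_of_not_isSquare hF s)]

theorem stmt_10_general (hF : ¬IsSquare (-1 : F)) (A : Matrix (Fin 2) (Fin 2) F) :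
    ∃ P : Matrix (Fin 2) (Fin 2) F, P.IsSymm ∧ P.trace = -A.trace ∧
      2 * P ^ 2 + Aᵀ * P + P * A = 0 := by
  by_cases hA : A.trace = 0
  · exact ⟨0, isSymm_zero, by simp [hA], by simp⟩
  obtain ⟨s, P, hP, rfl⟩ := exists_isSymm_skewMatrix_mul_sub_eq hF hA
  have : NeZero (2 : F) := ⟨fun h ↦ hF ⟨1, by linear_combination -h⟩⟩
  have trace_eq_zero : (skewMatrix s * P).trace = 0 :=
    trace_mul_eq_zero_of_transpose_eq_neg (transpose_skewMatrix s) hP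
  refine ⟨P, hP, ?_, riccati_of_transpose_eq_neg (transpose_skewMatrix s) hP⟩
  rw [trace_sub, trace_eq_zero, zero_sub, neg_neg]

end Field

theorem stmt_10 (A : Matrix (Fin 2) (Fin 2) ℝ) :
    ∃ P : Matrix (Fin 2) (Fin 2) ℝ, P.IsSymm ∧ P.trace = -A.trace ∧
      2 * P ^ 2 + Aᵀ * P + P * A = 0 :=
  stmt_10_general (not_isSquare_of_neg (by norm_num)) A
end

section
/- Let A = [[a, b], [c, d]] be a real 2×2 matrix with a + d ≠ 0 and b − c ≠ 0. Then the strictly orthogonal HHD of A is unique: if P₁ and P₂ are symmetric real 2×2 matrices with trace(P₁) = trace(P₂) = −trace(A) both satisfying 2Pᵢ² + AᵀPᵢ + PᵢA = 0 (i = 1, 2), then P₁ = P₂. -/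
open Matrix

/-!
The polarized Cayley–Hamilton identity for `2 × 2` matrices makes both `2 P²` and `A P + P A`
linear in `P` modulo scalar matrices. The Riccati equation thereby becomes
`(tr A + A - Aᵀ) P = -(tr A) A + σ`, where the scalar `σ = tr P² + tr (A P)` vanishes because
`2 σ` is the trace of the Riccati equation. So `P` solves a *linear* equation, whose coefficient
has determinant `(tr A)² + (A₀₁ - A₁₀)²`.
-/

section Matrices

variable {R : Type*} [CommRing R]

theorem mul_add_mul_swap_fin_two (A B : Matrix (Fin 2) (Fin 2) R) :
    A * B + B * A =
      A.trace • B + B.trace • A + ((A * B).trace - A.trace * B.trace) • 1 := by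
  simp only [← Matrix.ext_iff, Fin.forall_fin_two, Matrix.add_apply, Matrix.smul_apply,
    smul_eq_mul, mul_apply, trace_fin_two, Fin.sum_univ_two, one_apply_eq,
    one_apply_ne zero_ne_one, one_apply_ne one_ne_zero]
  refine ⟨⟨?_, ?_⟩, ?_, ?_⟩ <;> ring

theorem det_smul_one_add_sub_transpose_fin_two (t : R) (A : Matrix (Fin 2) (Fin 2) R) :
    (t • 1 + A - Aᵀ).det = t ^ 2 + (A 0 1 - A 1 0) ^ 2 := by
  simp only [det_fin_two, Matrix.sub_apply, Matrix.add_apply, Matrix.smul_apply, transpose_apply,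
    smul_eq_mul, one_apply_eq, one_apply_ne zero_ne_one, one_apply_ne one_ne_zero]
  ring

theorem trace_sq_add_trace_mul_eq_zero_of_riccati {n : Type*} [Fintype n] [DecidableEq n]
    {A P : Matrix n n R} (h2 : IsLeftRegular (2 : R)) (hP : P.IsSymm)
    (riccati : 2 * P ^ 2 + Aᵀ * P + P * A = 0) :
    (P ^ 2).trace + (A * P).trace = 0 := by
  have trace_transpose_mul_eq : (Aᵀ * P).trace = (A * P).trace := by
    rw [← trace_transpose_mul A P, hP.eq]
  have trace_riccati : 2 * ((P ^ 2).trace + (A * P).trace) = 0 :=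
    calc 2 * ((P ^ 2).trace + (A * P).trace)
      _ = (2 * P ^ 2 + Aᵀ * P + P * A).trace := by
          rw [two_mul (P ^ 2), trace_add, trace_add, trace_add, trace_transpose_mul_eq,
            trace_mul_comm P A]
          ring
      _ = 0 := by rw [riccati, trace_zero]
  exact h2 (trace_riccati.trans (mul_zero 2).symm)

end Matrices

/-- `P` is the gradient (symmetric) term of a strictly orthogonal Helmholtz–Hodge decomposition
`A = -P + H` of the linear vector field `x ↦ A x`. The divergence-free term `H = A + P` is
eliminated: `trace H = 0` becomes `trace_eq`, and `P H + Hᵀ P = 0` becomes `riccati`. -/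
structure IsStrictlyOrthogonalHHD_s11 {n R : Type*} [Fintype n] [DecidableEq n] [CommRing R]
    (A P : Matrix n n R) : Prop where
  isSymm : P.IsSymm
  trace_eq : P.trace = -A.trace
  riccati : 2 * P ^ 2 + Aᵀ * P + P * A = 0

theorem IsStrictlyOrthogonalHHD_s11.trace_smul_one_add_sub_transpose_mul {R : Type*} [CommRing R]
    {A P : Matrix (Fin 2) (Fin 2) R} (h : IsStrictlyOrthogonalHHD_s11 A P)
    (h2 : IsLeftRegular (2 : R)) :
    (A.trace • 1 + A - Aᵀ) * P = -(A.trace • A) := by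
  have sq_add_sq :
      P ^ 2 + P ^ 2 = -A.trace • P + -A.trace • P + ((P ^ 2).trace - A.trace ^ 2) • 1 := by
    simpa only [← pow_two, h.trace_eq, neg_sq] using mul_add_mul_swap_fin_two P P
  have mul_add_mul_swap :
      A * P + P * A = A.trace • P + -A.trace • A + ((A * P).trace + A.trace ^ 2) • 1 := by
    simpa only [h.trace_eq, mul_neg, sub_neg_eq_add, ← pow_two] using mul_add_mul_swap_fin_two A P
  have riccati : P ^ 2 + P ^ 2 + Aᵀ * P + P * A = 0 := two_mul (P ^ 2) ▸ h.riccati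
  rw [sub_mul, add_mul, smul_mul_assoc, one_mul]
  linear_combination (norm := module) sq_add_sq + mul_add_mul_swap - riccati
    + trace_sq_add_trace_mul_eq_zero_of_riccati h2 h.isSymm h.riccati •
      (1 : Matrix (Fin 2) (Fin 2) R)

theorem stmt_11_general {R : Type*} [CommRing R] {A P₁ P₂ : Matrix (Fin 2) (Fin 2) R}
    (h2 : IsLeftRegular (2 : R))
    (hA : IsLeftRegular (A.trace ^ 2 + (A 0 1 - A 1 0) ^ 2))
    (h₁ : IsStrictlyOrthogonalHHD_s11 A P₁) (h₂ : IsStrictlyOrthogonalHHD_s11 A P₂) :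
    P₁ = P₂ := by
  rw [← det_smul_one_add_sub_transpose_fin_two] at hA
  exact (isRegular_of_isLeftRegular_det hA).left
    ((h₁.trace_smul_one_add_sub_transpose_mul h2).trans
      (h₂.trace_smul_one_add_sub_transpose_mul h2).symm)

theorem stmt_11 (a b c d : ℝ) (htr : a + d ≠ 0) (hbc : b - c ≠ 0)
    (A : Matrix (Fin 2) (Fin 2) ℝ) (hA : A = !![a, b; c, d])
    (P₁ P₂ : Matrix (Fin 2) (Fin 2) ℝ)
    (hP₁ : P₁.IsSymm) (hP₂ : P₂.IsSymm)
    (htr₁ : P₁.trace = -A.trace) (htr₂ : P₂.trace = -A.trace)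
    (hric₁ : 2 * P₁ ^ 2 + Aᵀ * P₁ + P₁ * A = 0)
    (hric₂ : 2 * P₂ ^ 2 + Aᵀ * P₂ + P₂ * A = 0) :
    P₁ = P₂ := by
  have hdet : A.trace ^ 2 + (A 0 1 - A 1 0) ^ 2 ≠ 0 := by
    simpa [hA, trace_fin_two] using (by positivity : (a + d) ^ 2 + (b - c) ^ 2 ≠ 0)
  exact stmt_11_general (IsRegular.of_ne_zero two_ne_zero).left (IsRegular.of_ne_zero hdet).left
    ⟨hP₁, htr₁, hric₁⟩ ⟨hP₂, htr₂, hric₂⟩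
end

section
/- Let D be a symmetric invertible real n×n matrix, and let F = −P + H be an HHD of a real n×n matrix F (P symmetric, trace(P) = −trace(F), trace(H) = 0). Then there exist a skew-symmetric matrix Q and a symmetric matrix U with P = D U and H = −Q U if and only if D commutes with P and there exists a skew-symmetric matrix Q satisfying Q P + H D = 0. -/
open Matrix

/-!
Invertibility of `D` lets us write `P = D * U` for a unique `U`. Transposing this equation shows
that `U` is symmetric exactly when `D` commutes with `P`, equivalently with `U`. In that case
`Q * P + H * D = (Q * U + H) * D`, and cancelling `D` turns the vanishing of this matrix into
`H = -(Q * U)`, so the same `Q` serves on both sides.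
-/

theorem commute_self_mul_iff {S : Type*} [Semigroup S] {d u : S} (hd : IsLeftRegular d) :
    Commute d (d * u) ↔ Commute d u := by
  rw [commute_iff_eq, commute_iff_eq, mul_assoc, hd.eq_iff]

theorem add_mul_eq_zero_iff_of_commute {R : Type*} [NonUnitalRing R] {d u q h : R}
    (hd : IsRightRegular d) (hdu : Commute d u) :
    q * (d * u) + h * d = 0 ↔ h = -(q * u) := by
  rw [hdu.eq, ← mul_assoc, add_comm, add_eq_zero_iff_eq_neg, ← neg_mul, hd.eq_iff]

theorem isSymm_iff_commute_of_isSymm_mul {n R : Type*} [Fintype n] [NonUnitalCommSemiring R]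
    {D U : Matrix n n R} (hD : D.IsSymm) (hDreg : IsRightRegular D) (hDU : (D * U).IsSymm) :
    U.IsSymm ↔ Commute D U := by
  have hUD : Uᵀ * D = D * U := by
    rw [← hDU.eq, transpose_mul, hD.eq]
  rw [IsSymm, commute_iff_eq, ← hUD, hDreg.eq_iff]

theorem stmt_12_general {n R : Type*} [Fintype n] [DecidableEq n] [CommRing R]
    {D P H : Matrix n n R} (hD : D.IsSymm) (hDinv : IsUnit D) (hP : P.IsSymm) :
    (∃ Q U : Matrix n n R, Qᵀ = -Q ∧ Uᵀ = U ∧ P = D * U ∧ H = -(Q * U)) ↔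
    (D * P = P * D ∧ ∃ Q : Matrix n n R, Qᵀ = -Q ∧ Q * P + H * D = 0) := by
  have hDreg : IsRegular D := hDinv.isRegular
  constructor
  · rintro ⟨Q, U, hQ, hU, rfl, hH⟩
    have hDU : Commute D U := (isSymm_iff_commute_of_isSymm_mul hD hDreg.right hP).1 hU
    exact ⟨(commute_self_mul_iff hDreg.left).2 hDU, Q, hQ,
      (add_mul_eq_zero_iff_of_commute hDreg.right hDU).2 hH⟩
  · rintro ⟨hDP, Q, hQ, hQP⟩
    obtain ⟨U, rfl⟩ : D ∣ P := hDinv.dvd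
    have hDU : Commute D U := (commute_self_mul_iff hDreg.left).1 hDP
    exact ⟨Q, U, hQ, (isSymm_iff_commute_of_isSymm_mul hD hDreg.right hP).2 hDU, rfl,
      (add_mul_eq_zero_iff_of_commute hDreg.right hDU).1 hQP⟩

theorem stmt_12 (n : ℕ) (D F P H : Matrix (Fin n) (Fin n) ℝ)
    (hD : D.IsSymm) (hDinv : IsUnit D)
    (hP : P.IsSymm) (hF : F = -P + H)
    (htrP : P.trace = -F.trace) (htrH : H.trace = 0) :
    (∃ Q U : Matrix (Fin n) (Fin n) ℝ,
        Qᵀ = -Q ∧ Uᵀ = U ∧ P = D * U ∧ H = -(Q * U)) ↔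
    (D * P = P * D ∧ ∃ Q : Matrix (Fin n) (Fin n) ℝ, Qᵀ = -Q ∧ Q * P + H * D = 0) :=
  stmt_12_general hD hDinv hP
end

section
/- Let P be a symmetric invertible real n×n matrix and H a real n×n matrix satisfying P H + Hᵀ P = 0. Then the matrix H P⁻¹ is skew-symmetric, i.e. (H P⁻¹)ᵀ = −H P⁻¹. Consequently, a strictly orthogonal HHD A = −P + H with invertible gradient part P can be written as an SDE decomposition A = −(I + Q)U with D = I, U = P symmetric, and Q = −H P⁻¹ skew-symmetric. -/
open Matrix

/-! For invertible `P`, the congruence `M ↦ (P⁻¹)ᵀ * M * P⁻¹` carries `Pᵀ * H + Hᵀ * P` to the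
symmetrization `Q + Qᵀ` of `Q = H * P⁻¹`, so one of the two vanishes exactly when the other does. -/

section

variable {m n R : Type*} [Fintype n] [DecidableEq n] [CommRing R] {P : Matrix n n R}

theorem inv_transpose_mul_add_mul_inv (hP : IsUnit P.det) (H : Matrix n n R) :
    P⁻¹ᵀ * (Pᵀ * H + Hᵀ * P) * P⁻¹ = H * P⁻¹ + (H * P⁻¹)ᵀ := by
  have inv_transpose_mul_transpose : P⁻¹ᵀ * Pᵀ = 1 := by
    rw [← transpose_mul, mul_nonsing_inv P hP, transpose_one]
  calc
    P⁻¹ᵀ * (Pᵀ * H + Hᵀ * P) * P⁻¹ = P⁻¹ᵀ * Pᵀ * (H * P⁻¹) + P⁻¹ᵀ * Hᵀ * (P * P⁻¹) := by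
      noncomm_ring
    _ = H * P⁻¹ + (H * P⁻¹)ᵀ := by
      rw [inv_transpose_mul_transpose, mul_nonsing_inv P hP, Matrix.one_mul, Matrix.mul_one,
        transpose_mul]

theorem transpose_mul_inv_eq_neg_iff (hP : IsUnit P.det) (H : Matrix n n R) :
    (H * P⁻¹)ᵀ = -(H * P⁻¹) ↔ Pᵀ * H + Hᵀ * P = 0 := by
  have isUnit_inv : IsUnit P⁻¹ := isUnit_nonsing_inv_iff.mpr ((isUnit_iff_isUnit_det P).mpr hP)
  rw [eq_neg_iff_add_eq_zero, add_comm, ← inv_transpose_mul_add_mul_inv hP,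
    isUnit_inv.mul_left_eq_zero, (P⁻¹.isUnit_transpose.mpr isUnit_inv).mul_right_eq_zero]

theorem neg_mul_add_eq_neg_add_neg_mul_inv_mul (hP : IsUnit P.det) (D H : Matrix m n R) :
    -(D * P) + H = -((D + -(H * P⁻¹)) * P) := by
  rw [Matrix.add_mul, Matrix.neg_mul, nonsing_inv_mul_cancel_right P H hP, neg_add, neg_neg]

theorem stmt_13_general (H : Matrix n n R) (hP : IsUnit P.det) (horth : Pᵀ * H + Hᵀ * P = 0) :
    (H * P⁻¹)ᵀ = -(H * P⁻¹) ∧ -P + H = -((1 + -(H * P⁻¹)) * P) := by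
  refine ⟨(transpose_mul_inv_eq_neg_iff hP H).mpr horth, ?_⟩
  simpa only [Matrix.one_mul] using neg_mul_add_eq_neg_add_neg_mul_inv_mul hP 1 H

end

theorem stmt_13 (n : ℕ) (P H : Matrix (Fin n) (Fin n) ℝ)
    (hP : P.IsSymm) (hPinv : IsUnit P.det)
    (horth : P * H + Hᵀ * P = 0) :
    (H * P⁻¹)ᵀ = -(H * P⁻¹) ∧
    -P + H = -((1 + -(H * P⁻¹)) * P) :=
  stmt_13_general H hPinv (by rwa [hP.eq])
end

section
/- Let p₁, q₁, r₁, p₂, q₂, r₂ be real constants and consider the planar quadratic vector field F(x, y) = (f(x, y), g(x, y)) with f(x, y) = p₁x² + q₁xy + r₁y² and g(x, y) = p₂x² + q₂xy + r₂y². If the coefficients satisfy q₁² − 2(p₂ − r₂)q₁ − 4p₂r₂ + q₂² + 2(p₁ − r₁)q₂ − 4p₁r₁ = 0, then F admits a strictly orthogonal Helmholtz–Hodge decomposition: there exist smooth functions V, H : ℝ² → ℝ such that f = −∂V/∂x + ∂H/∂y and g = −∂V/∂y − ∂H/∂x everywhere on ℝ², and ⟨∇V(x, y), (J∇H)(x,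 y)⟩ = (∂V/∂x)(∂H/∂y) − (∂V/∂y)(∂H/∂x) = 0 at every point (x, y) ∈ ℝ². -/
/-!
If `V = a W` and `H = b W` for a single potential `W`, then `∇V` and `J∇H` are automatically
orthogonal, and `F = -a ∇W + b J∇W` says that the constant rotation and scaling
`-(a + b J) F / (a² + b²)` of `F` is the gradient of `W`. By the Poincaré lemma such a `W` exists
as soon as the rotated field is curl-free, i.e. `a curl F = b div F`. For a quadratic field,
`div F` and `curl F` are linear forms, and the condition on the coefficients is the vanishing of
their determinant, which provides a suitable `(a, b) ≠ 0`.
-/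

section ClosedForms

variable {E F : Type*} [NormedAddCommGroup E] [NormedSpace ℝ E] [NormedAddCommGroup F]
  [NormedSpace ℝ F] [CompleteSpace F] {n : ℕ∞}

theorem exists_contDiff_forall_hasFDerivAt_of_fderiv_symmetric {ω : E → E →L[ℝ] F}
    (hω : ContDiff ℝ n ω) (hn : n ≠ 0)
    (hsymm : ∀ p x y, fderiv ℝ ω p x y = fderiv ℝ ω p y x) :
    ∃ W : E → F, ContDiff ℝ (n + 1) W ∧ ∀ p, HasFDerivAt W (ω p) p := by
  have hdiff : Differentiable ℝ ω := hω.differentiable (by exact_mod_cast hn)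
  obtain ⟨W, hW⟩ := convex_univ.exists_forall_hasFDerivAt_of_fderiv_symmetric isOpen_univ
    hdiff.differentiableOn fun p _ ↦ hsymm p
  have hW' (p : E) : HasFDerivAt W (ω p) p := hW p (Set.mem_univ p)
  refine ⟨W, contDiff_succ_iff_fderiv.2 ⟨fun p ↦ (hW' p).differentiableAt, by simp, ?_⟩, hW'⟩
  rwa [funext fun p ↦ (hW' p).fderiv]

end ClosedForms

section PlanarFields

/-- The divergence `∂f/∂x + ∂g/∂y` of the planar vector field `(f, g)`. -/
noncomputable def planarDivergence (f g : ℝ × ℝ → ℝ) (p : ℝ × ℝ) : ℝ :=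
  fderiv ℝ f p (1, 0) + fderiv ℝ g p (0, 1)

/-- The scalar curl `∂g/∂x - ∂f/∂y` of the planar vector field `(f, g)`. -/
noncomputable def planarCurl (f g : ℝ × ℝ → ℝ) (p : ℝ × ℝ) : ℝ :=
  fderiv ℝ g p (1, 0) - fderiv ℝ f p (0, 1)

/-- `(f, g) = -∇V + J∇H` is a strictly orthogonal Helmholtz–Hodge decomposition of the planar
vector field `(f, g)`, where `J∇H = (∂H/∂y, -∂H/∂x)`. -/
structure IsStrictlyOrthogonalHHD_s19 (f g V H : ℝ × ℝ → ℝ) : Prop where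
  differentiable_potential : Differentiable ℝ V
  differentiable_hamiltonian : Differentiable ℝ H
  fst_eq : ∀ p, f p = -fderiv ℝ V p (1, 0) + fderiv ℝ H p (0, 1)
  snd_eq : ∀ p, g p = -fderiv ℝ V p (0, 1) - fderiv ℝ H p (1, 0)
  orthogonal : ∀ p, fderiv ℝ V p (1, 0) * fderiv ℝ H p (0, 1)
    - fderiv ℝ V p (0, 1) * fderiv ℝ H p (1, 0) = 0

variable {f g : ℝ × ℝ → ℝ} {n : ℕ∞}

theorem exists_contDiff_fderiv_eq_of_planarCurl_eq_zero (hf : ContDiff ℝ n f)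
    (hg : ContDiff ℝ n g) (hn : n ≠ 0) (hcurl : ∀ p, planarCurl f g p = 0) :
    ∃ W : ℝ × ℝ → ℝ, ContDiff ℝ (n + 1) W ∧
      ∀ p, fderiv ℝ W p (1, 0) = f p ∧ fderiv ℝ W p (0, 1) = g p := by
  have hn' : (n : WithTop ℕ∞) ≠ 0 := by exact_mod_cast hn
  let ω (p : ℝ × ℝ) : ℝ × ℝ →L[ℝ] ℝ :=
    f p • ContinuousLinearMap.fst ℝ ℝ ℝ + g p • ContinuousLinearMap.snd ℝ ℝ ℝ
  have hω (p x y : ℝ × ℝ) :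
      fderiv ℝ ω p x y = fderiv ℝ f p x * y.1 + fderiv ℝ g p x * y.2 := by
    have hωp : HasFDerivAt ω _ p :=
      ((hf.differentiable hn' p).hasFDerivAt.smul_const (ContinuousLinearMap.fst ℝ ℝ ℝ)).add
        ((hg.differentiable hn' p).hasFDerivAt.smul_const (ContinuousLinearMap.snd ℝ ℝ ℝ))
    simp [hωp.fderiv]
  have fderiv_apply (h : ℝ × ℝ → ℝ) (p x : ℝ × ℝ) :
      fderiv ℝ h p x = x.1 * fderiv ℝ h p (1, 0) + x.2 * fderiv ℝ h p (0, 1) := by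
    rw [← smul_eq_mul, ← smul_eq_mul, ← map_smul, ← map_smul, ← map_add]
    simp
  have hsymm (p x y : ℝ × ℝ) : fderiv ℝ ω p x y = fderiv ℝ ω p y x := by
    rw [hω, hω, fderiv_apply f p x, fderiv_apply f p y, fderiv_apply g p x, fderiv_apply g p y]
    have hp : fderiv ℝ g p (1, 0) - fderiv ℝ f p (0, 1) = 0 := hcurl p
    linear_combination (x.1 * y.2 - x.2 * y.1) * hp
  obtain ⟨W, hW, hWω⟩ := exists_contDiff_forall_hasFDerivAt_of_fderiv_symmetric
    ((hf.smul contDiff_const).add (hg.smul contDiff_const)) hn hsymm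
  exact ⟨W, hW, fun p ↦ by simp [(hWω p).fderiv]⟩

theorem planarCurl_scaledRotation {p : ℝ × ℝ} (hf : DifferentiableAt ℝ f p)
    (hg : DifferentiableAt ℝ g p) (α β : ℝ) :
    planarCurl (fun q ↦ α * f q + β * g q) (fun q ↦ -β * f q + α * g q) p =
      α * planarCurl f g p - β * planarDivergence f g p := by
  have hcomb (s t : ℝ) : HasFDerivAt (fun q ↦ s * f q + t * g q)
      (s • fderiv ℝ f p + t • fderiv ℝ g p) p :=
    (hf.hasFDerivAt.const_mul s).add (hg.hasFDerivAt.const_mul t)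
  simp only [planarCurl, planarDivergence, (hcomb _ _).fderiv, add_apply, smul_apply, smul_eq_mul]
  ring

theorem isStrictlyOrthogonalHHD_const_mul {W : ℝ × ℝ → ℝ} {a b : ℝ}
    (hW : Differentiable ℝ W)
    (hf : ∀ p, f p = -a * fderiv ℝ W p (1, 0) + b * fderiv ℝ W p (0, 1))
    (hg : ∀ p, g p = -a * fderiv ℝ W p (0, 1) - b * fderiv ℝ W p (1, 0)) :
    IsStrictlyOrthogonalHHD_s19 f g (fun p ↦ a * W p) (fun p ↦ b * W p) := by
  have hfderiv (c : ℝ) (p : ℝ × ℝ) : fderiv ℝ (fun q ↦ c * W q) p = c • fderiv ℝ W p :=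
    fderiv_const_mul (hW p) c
  refine ⟨hW.const_mul a, hW.const_mul b, fun p ↦ ?_, fun p ↦ ?_, fun p ↦ ?_⟩ <;>
    simp only [hfderiv, hf, hg, smul_apply, smul_eq_mul] <;> ring

theorem exists_isStrictlyOrthogonalHHD_of_mul_planarCurl_eq (hf : ContDiff ℝ n f)
    (hg : ContDiff ℝ n g) (hn : n ≠ 0) {a b : ℝ} (hab : a ≠ 0 ∨ b ≠ 0)
    (h : ∀ p, a * planarCurl f g p = b * planarDivergence f g p) :
    ∃ V H : ℝ × ℝ → ℝ, ContDiff ℝ (n + 1) V ∧ ContDiff ℝ (n + 1) H ∧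
      IsStrictlyOrthogonalHHD_s19 f g V H := by
  have hn' : (n : WithTop ℕ∞) ≠ 0 := by exact_mod_cast hn
  have hnorm : a ^ 2 + b ^ 2 ≠ 0 := by
    rcases hab with ha | hb <;> positivity
  obtain ⟨c, hc⟩ : ∃ c, c * (a ^ 2 + b ^ 2) = -1 := ⟨_, div_mul_cancel₀ (-1) hnorm⟩
  have hcurl (p : ℝ × ℝ) : planarCurl (fun q ↦ c * a * f q + c * b * g q)
      (fun q ↦ -(c * b) * f q + c * a * g q) p = 0 := by
    rw [planarCurl_scaledRotation (hf.differentiable hn' p) (hg.differentiable hn' p)]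
    linear_combination c * h p
  obtain ⟨W, hW, hW'⟩ := exists_contDiff_fderiv_eq_of_planarCurl_eq_zero
    ((contDiff_const.mul hf).add (contDiff_const.mul hg))
    ((contDiff_const.mul hf).add (contDiff_const.mul hg)) hn hcurl
  refine ⟨fun p ↦ a * W p, fun p ↦ b * W p, contDiff_const.mul hW, contDiff_const.mul hW,
    isStrictlyOrthogonalHHD_const_mul (hW.differentiable (by simp)) (fun p ↦ ?_) (fun p ↦ ?_)⟩
  · rw [(hW' p).1, (hW' p).2]
    linear_combination f p * hc
  · rw [(hW' p).1, (hW' p).2]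
    linear_combination g p * hc

end PlanarFields

section QuadraticFields

/-- The binary quadratic form `p x² + q x y + r y²`, as a function on the plane. -/
def binaryQuadratic (p q r : ℝ) (z : ℝ × ℝ) : ℝ :=
  p * z.1 ^ 2 + q * z.1 * z.2 + r * z.2 ^ 2

theorem contDiff_binaryQuadratic (p q r : ℝ) {n : WithTop ℕ∞} :
    ContDiff ℝ n (binaryQuadratic p q r) := by
  unfold binaryQuadratic
  fun_prop

theorem fderiv_binaryQuadratic_apply (p q r : ℝ) (z v : ℝ × ℝ) :
    fderiv ℝ (binaryQuadratic p q r) z v =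
      (2 * p * z.1 + q * z.2) * v.1 + (q * z.1 + 2 * r * z.2) * v.2 := by
  have hfst : HasFDerivAt Prod.fst (ContinuousLinearMap.fst ℝ ℝ ℝ) z := hasFDerivAt_fst
  have hsnd : HasFDerivAt Prod.snd (ContinuousLinearMap.snd ℝ ℝ ℝ) z := hasFDerivAt_snd
  have hquad : HasFDerivAt (binaryQuadratic p q r) _ z :=
    (((hfst.pow 2).const_mul p).add ((hfst.const_mul q).mul hsnd)).add ((hsnd.pow 2).const_mul r)
  rw [hquad.fderiv]
  simp only [Nat.add_one_sub_one, pow_one, nsmul_eq_mul, Nat.cast_ofNat, add_apply, smul_apply,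
    ContinuousLinearMap.coe_fst', ContinuousLinearMap.coe_snd', smul_eq_mul]
  ring

variable (p₁ q₁ r₁ p₂ q₂ r₂ : ℝ)

theorem planarDivergence_binaryQuadratic (z : ℝ × ℝ) :
    planarDivergence (binaryQuadratic p₁ q₁ r₁) (binaryQuadratic p₂ q₂ r₂) z =
      (2 * p₁ + q₂) * z.1 + (q₁ + 2 * r₂) * z.2 := by
  simp only [planarDivergence, fderiv_binaryQuadratic_apply]
  ring

theorem planarCurl_binaryQuadratic (z : ℝ × ℝ) :
    planarCurl (binaryQuadratic p₁ q₁ r₁) (binaryQuadratic p₂ q₂ r₂) z =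
      (2 * p₂ - q₁) * z.1 + (q₂ - 2 * r₁) * z.2 := by
  simp only [planarCurl, fderiv_binaryQuadratic_apply]
  ring

theorem exists_mul_planarCurl_eq_mul_planarDivergence_binaryQuadratic
    (h : (2 * p₂ - q₁) * (q₁ + 2 * r₂) = (q₂ - 2 * r₁) * (2 * p₁ + q₂)) :
    ∃ a b : ℝ, (a ≠ 0 ∨ b ≠ 0) ∧ ∀ z,
      a * planarCurl (binaryQuadratic p₁ q₁ r₁) (binaryQuadratic p₂ q₂ r₂) z =
        b * planarDivergence (binaryQuadratic p₁ q₁ r₁) (binaryQuadratic p₂ q₂ r₂) z := by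
  let M : Matrix (Fin 2) (Fin 2) ℝ := !![2 * p₂ - q₁, q₂ - 2 * r₁; 2 * p₁ + q₂, q₁ + 2 * r₂]
  have hdet : M.det = 0 := by
    rw [Matrix.det_fin_two_of, h, sub_self]
  obtain ⟨w, hw, hwM⟩ := Matrix.exists_vecMul_eq_zero_iff.2 hdet
  have hfst : w 0 * (2 * p₂ - q₁) + w 1 * (2 * p₁ + q₂) = 0 := by
    simpa [M, Matrix.vecMul, dotProduct, Fin.sum_univ_two] using congrFun hwM 0
  have hsnd : w 0 * (q₂ - 2 * r₁) + w 1 * (q₁ + 2 * r₂) = 0 := by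
    simpa [M, Matrix.vecMul, dotProduct, Fin.sum_univ_two] using congrFun hwM 1
  refine ⟨w 0, -w 1, ?_, fun z ↦ ?_⟩
  · simpa [Function.ne_iff] using hw
  · rw [planarCurl_binaryQuadratic, planarDivergence_binaryQuadratic]
    linear_combination z.1 * hfst + z.2 * hsnd

end QuadraticFields

theorem stmt_19 (p₁ q₁ r₁ p₂ q₂ r₂ : ℝ)
    (hcond : q₁ ^ 2 - 2 * (p₂ - r₂) * q₁ - 4 * p₂ * r₂
      + q₂ ^ 2 + 2 * (p₁ - r₁) * q₂ - 4 * p₁ * r₁ = 0) :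
    ∃ V H : ℝ × ℝ → ℝ, ContDiff ℝ (⊤ : ℕ∞) V ∧ ContDiff ℝ (⊤ : ℕ∞) H ∧
      ∀ p : ℝ × ℝ,
        (p₁ * p.1 ^ 2 + q₁ * p.1 * p.2 + r₁ * p.2 ^ 2
          = -fderiv ℝ V p (1, 0) + fderiv ℝ H p (0, 1)) ∧
        (p₂ * p.1 ^ 2 + q₂ * p.1 * p.2 + r₂ * p.2 ^ 2
          = -fderiv ℝ V p (0, 1) - fderiv ℝ H p (1, 0)) ∧
        (fderiv ℝ V p (1, 0) * fderiv ℝ H p (0, 1)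
          - fderiv ℝ V p (0, 1) * fderiv ℝ H p (1, 0) = 0) := by
  obtain ⟨a, b, hab, hcurl_div⟩ :=
    exists_mul_planarCurl_eq_mul_planarDivergence_binaryQuadratic p₁ q₁ r₁ p₂ q₂ r₂
      (by linear_combination -hcond)
  obtain ⟨V, H, hV, hH, hVH⟩ := exists_isStrictlyOrthogonalHHD_of_mul_planarCurl_eq
    (n := ⊤) (contDiff_binaryQuadratic p₁ q₁ r₁) (contDiff_binaryQuadratic p₂ q₂ r₂)
    ENat.top_ne_zero hab hcurl_div
  exact ⟨V, H, hV.of_le le_self_add, hH.of_le le_self_add,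
    fun p ↦ ⟨hVH.fst_eq p, hVH.snd_eq p, hVH.orthogonal p⟩⟩
end
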